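/- In a uniform ℤ-graded vertex algebra V, for all a, b ∈ V and all n ∈ ℤ one has the Leibniz rule L_{−1}(a(n)b) = (L_{−1}a)(n)b + a(n)(L_{−1}b). -/

import Mathlib

/-- A uniform ℤ-graded vertex algebra: a ℤ-graded complex vector space with bilinear
products `a(n)b`, a translation operator `L₋₁`, and a vacuum `1`, satisfying uniform
locality, translation covariance, the vacuum-field axiom and the creation axiom. -/
structure UniformVertexAlgebra (V : Type*) [AddCommGroup V] [Module ℂ V] where
  /-- The grading `V = ⊕_{n ∈ ℤ} V_n`. -/
  grading : ℤ → Submodule ℂ V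
  /-- The grading is an (internal) direct sum decomposition of `V`. -/
  decomposition : DirectSum.Decomposition grading
  /-- The bilinear products: `mul n a b` is `a(n)b`. -/
  mul : ℤ → V →ₗ[ℂ] V →ₗ[ℂ] V
  /-- The translation operator `L₋₁`. -/
  T : V →ₗ[ℂ] V
  /-- The vacuum vector `1`. -/
  vac : V
  vac_mem : vac ∈ grading 0
  /-- `a(n)` maps `V_m` into `V_{m−n+k−1}` whenever `a ∈ V_k`. -/
  mul_mem : ∀ (n k m : ℤ) (a c : V), a ∈ grading k → c ∈ grading m →
    mul n a c ∈ grading (m - n + k - 1)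
  /-- `L₋₁` has degree one. -/
  T_mem : ∀ (n : ℤ) (a : V), a ∈ grading n → T a ∈ grading (n + 1)
  /-- Uniform locality, in coefficient form: `(z−t)^N [a(z), b(t)] = 0`. -/
  locality : ∀ a b : V, ∃ N : ℕ, ∀ (p q : ℤ) (c : V),
    ∑ r ∈ Finset.range (N + 1),
      ((-1 : ℂ) ^ r * (N.choose r : ℂ)) •
        (mul (p + N - r) a (mul (q + r) b c) - mul (q + r) b (mul (p + N - r) a c)) = 0
  /-- Translation covariance: `[L₋₁, a(n)] = −n·a(n−1)`. -/
  translation : ∀ (n : ℤ) (a c : V),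
    T (mul n a c) - mul n a (T c) = -(n • mul (n - 1) a c)
  T_vac : T vac = 0
  /-- Vacuum field: `1(n)c = c` if `n = −1` and `0` otherwise. -/
  vac_field : ∀ (n : ℤ) (c : V), mul n vac c = if n = -1 then c else 0
  /-- Creation: `a(n)1 = 0` for `n ≥ 0`. -/
  creation : ∀ (n : ℤ) (a : V), 0 ≤ n → mul n a vac = 0
  /-- Creation: `a(−1)1 = a`. -/
  create_self : ∀ a : V, mul (-1) a vac = a

/-- The locality statement for a pair `(a,b)` with a specific witness `N`. -/
def UniformVertexAlgebra.LocalityAt {V : Type*} [AddCommGroup V] [Module ℂ V]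
    (A : UniformVertexAlgebra V) (a b : V) (N : ℕ) : Prop :=
  ∀ (p q : ℤ) (c : V),
    ∑ r ∈ Finset.range (N + 1),
      ((-1 : ℂ) ^ r * (N.choose r : ℂ)) •
        (A.mul (p + N - r) a (A.mul (q + r) b c) -
          A.mul (q + r) b (A.mul (p + N - r) a c)) = 0

/-! Translation covariance gives `T (a(n)b) = a(n)(T b) - n • a(n-1)b`, so the Leibniz rule says
that the field of `T a` is the derivative `∂a(z)` of the field of `a`. Both fields are translation
covariant and both create the state `T a` from the vacuum; applying `T` repeatedly shows that they
agree on the vacuum. Both are local with respect to every field `b(t)`, so by Goddard's uniqueness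
argument they agree on every state `b = b(-1)1`.

As `a(n)b` need not vanish for large `n`, that argument has to be made on coefficients:
`(z - t)^N` kills a distribution `∑ f(p,q) z^(-p-1) t^(-q-1)` exactly when, along each antidiagonal
`p + q = s`, the function `q ↦ f(s-q,q)` is killed by the `N`-th iterated difference, i.e. is
polynomial of degree `< N`. A polynomial function on `ℤ` that vanishes for all large `q` vanishes
identically. -/

section ForwardDifference

open fwdDiff

variable {M G H : Type*} [AddCommMonoid M] [AddCommGroup G] [AddCommGroup H] {h : M}

lemma fwdDiff_iter_zero (n : ℕ) : (Δ_[h])^[n] (0 : M → G) = 0 :=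
  Function.iterate_fixed (fwdDiff_const h 0) n

lemma fwdDiff_iter_eq_zero_of_le {f : M → G} {m n : ℕ} (hmn : m ≤ n) (hf : (Δ_[h])^[m] f = 0) :
    (Δ_[h])^[n] f = 0 := by
  rw [← Nat.sub_add_cancel hmn, Function.iterate_add_apply, hf, fwdDiff_iter_zero]

lemma fwdDiff_iter_map (F : G →+ H) (f : M → G) (n : ℕ) :
    (Δ_[h])^[n] (fun x ↦ F (f x)) = fun x ↦ F ((Δ_[h])^[n] f x) := by
  have hF : Function.Semiconj (fun (g : M → G) x ↦ F (g x)) Δ_[h] Δ_[h] :=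
    fun g ↦ funext fun x ↦ map_sub F (g (x + h)) (g x)
  exact ((hF.iterate_right n).eq f).symm

lemma fwdDiff_iter_succ_smul_eq_zero {R : Type*} [Ring R] [Module R G] {f : M → R} {c : R}
    (hf : Δ_[h] f = fun _ ↦ c) {g : M → G} {n : ℕ} (hg : (Δ_[h])^[n] g = 0) :
    (Δ_[h])^[n + 1] (f • g) = 0 := by
  have difference_smul (g : M → G) : Δ_[h] (f • g) = c • g + f • Δ_[h] g + c • Δ_[h] g := by
    rw [fwdDiff_smul, hf]
    rfl
  induction n generalizing g with
  | zero =>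
    obtain rfl : g = 0 := hg
    rw [smul_zero, fwdDiff_iter_zero]
  | succ n ih =>
    have hg' : (Δ_[h])^[n + 1] (Δ_[h] g) = 0 := fwdDiff_iter_eq_zero_of_le n.le_succ hg
    rw [Function.iterate_succ_apply, difference_smul, fwdDiff_iter_add, fwdDiff_iter_add,
      fwdDiff_iter_const_smul, fwdDiff_iter_const_smul, hg, hg', ih hg]
    simp only [smul_zero, add_zero]

lemma eq_zero_of_fwdDiff_iter_eq_zero {f : ℤ → G} {n : ℕ} (hf : (Δ_[1])^[n] f = 0) {m : ℤ}
    (hm : ∀ q ≥ m, f q = 0) : f = 0 := by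
  induction n generalizing f with
  | zero => exact hf
  | succ n ih =>
    have difference_eq_zero : Δ_[1] f = 0 :=
      ih hf fun q hq ↦ by rw [fwdDiff, hm _ (by lia), hm _ hq, sub_zero]
    funext q
    rcases le_total m q with hq | hq
    · exact hm q hq
    · induction q, hq using Int.leInductionDown with
      | base => exact hm m le_rfl
      | pred q _ hq =>
        have step := congrFun difference_eq_zero (q - 1)
        rwa [fwdDiff, sub_add_cancel, hq, Pi.zero_apply, Pi.zero_apply, zero_sub,
          neg_eq_zero] at step

end ForwardDifference

/-- A formal distribution `φ(z) = ∑ φ n z^(-n-1)` with coefficients in `L`, infinite in both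
directions, encoded by its coefficients. -/
abbrev FormalDistribution (L : Type*) := ℤ → L

namespace FormalDistribution

open fwdDiff

/-- The formal derivative `∂φ(z)`; its coefficient of `z^(-n-1)` is `-n φ (n-1)`. -/
def deriv {L : Type*} [AddCommGroup L] (φ : FormalDistribution L) : FormalDistribution L :=
  fun n ↦ -(n • φ (n - 1))

lemma deriv_apply {L : Type*} [AddCommGroup L] (φ : FormalDistribution L) (n : ℤ) :
    φ.deriv n = -(n • φ (n - 1)) :=
  rfl

section Locality

variable {L : Type*} [LieRing L]

/-- Mutual locality `(z - t)^N [φ(z), ψ(t)] = 0`. Up to a sign, multiplication by `z - t` is the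
forward difference along the antidiagonals `p + q = s` of the array of coefficients
`⁅φ p, ψ q⁆`, so locality is expressed by iterated differences. -/
def MutuallyLocal (φ ψ : FormalDistribution L) : Prop :=
  ∃ N : ℕ, ∀ s : ℤ, (Δ_[1])^[N] (fun q ↦ ⁅φ (s - q), ψ q⁆) = 0

lemma mutuallyLocal_iff_sum {φ ψ : FormalDistribution L} :
    MutuallyLocal φ ψ ↔ ∃ N : ℕ, ∀ p q : ℤ, ∑ r ∈ Finset.range (N + 1),
      ((-1 : ℤ) ^ r * N.choose r) • ⁅φ (p + N - r), ψ (q + r)⁆ = 0 := by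
  have sum_eq_difference (N : ℕ) (p q : ℤ) : ∑ r ∈ Finset.range (N + 1),
      ((-1 : ℤ) ^ r * N.choose r) • ⁅φ (p + N - r), ψ (q + r)⁆ =
        (-1 : ℤ) ^ N • (Δ_[1])^[N] (fun x ↦ ⁅φ (p + N + q - x), ψ x⁆) q := by
    rw [fwdDiff_iter_eq_sum_shift, Finset.smul_sum]
    refine Finset.sum_congr rfl fun r hr ↦ ?_
    have sign : (-1 : ℤ) ^ N * (-1) ^ (N - r) = (-1) ^ r := by
      obtain ⟨k, rfl⟩ := Nat.exists_eq_add_of_le (Finset.mem_range_succ_iff.mp hr)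
      rw [Nat.add_sub_cancel_left, pow_add, mul_assoc, ← mul_pow, neg_one_mul, neg_neg, one_pow,
        mul_one]
    rw [smul_smul, ← mul_assoc, sign, nsmul_one, add_comm q, add_sub_add_right_eq_sub]
  have sum_eq_zero_iff (N : ℕ) (p q : ℤ) : ∑ r ∈ Finset.range (N + 1),
      ((-1 : ℤ) ^ r * N.choose r) • ⁅φ (p + N - r), ψ (q + r)⁆ = 0 ↔
        (Δ_[1])^[N] (fun x ↦ ⁅φ (p + N + q - x), ψ x⁆) q = 0 := by
    rw [sum_eq_difference, (isUnit_neg_one.pow N).smul_eq_zero]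
  simp only [sum_eq_zero_iff]
  refine exists_congr fun N ↦ ⟨fun h p q ↦ congrFun (h _) q, fun h s ↦ funext fun q ↦ ?_⟩
  simpa only [sub_add_cancel, Pi.zero_apply] using h (s - q - N) q

namespace MutuallyLocal

variable {φ φ₁ φ₂ ψ : FormalDistribution L}

lemma sub (h₁ : MutuallyLocal φ₁ ψ) (h₂ : MutuallyLocal φ₂ ψ) : MutuallyLocal (φ₁ - φ₂) ψ := by
  obtain ⟨N₁, h₁⟩ := h₁
  obtain ⟨N₂, h₂⟩ := h₂
  refine ⟨max N₁ N₂, fun s ↦ ?_⟩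
  have bracket_sub : (fun q ↦ ⁅(φ₁ - φ₂) (s - q), ψ q⁆) =
      (fun q ↦ ⁅φ₁ (s - q), ψ q⁆) + (-1 : ℤ) • fun q ↦ ⁅φ₂ (s - q), ψ q⁆ := by
    funext q
    simp [sub_eq_add_neg]
  rw [bracket_sub, fwdDiff_iter_add, fwdDiff_iter_const_smul,
    fwdDiff_iter_eq_zero_of_le (le_max_left N₁ N₂) (h₁ s),
    fwdDiff_iter_eq_zero_of_le (le_max_right N₁ N₂) (h₂ s), smul_zero, add_zero]

lemma deriv_left (h : MutuallyLocal φ ψ) : MutuallyLocal φ.deriv ψ := by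
  obtain ⟨N, h⟩ := h
  refine ⟨N + 1, fun s ↦ ?_⟩
  have linear_smul : (fun q ↦ ⁅φ.deriv (s - q), ψ q⁆) =
      (fun q ↦ q - s) • fun q ↦ ⁅φ (s - 1 - q), ψ q⁆ := by
    funext q
    rw [deriv_apply, ← neg_smul, neg_sub, zsmul_lie, sub_right_comm]
    rfl
  rw [linear_smul]
  exact fwdDiff_iter_succ_smul_eq_zero (c := 1) (by ext q; simp [fwdDiff]) (h (s - 1))

end MutuallyLocal

end Locality

section Covariance

variable {L : Type*} [LieRing L]

/-- Translation covariance `[T, φ(z)] = ∂φ(z)`. -/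
def TranslationCovariant (T : L) (φ : FormalDistribution L) : Prop :=
  ∀ n, ⁅T, φ n⁆ = φ.deriv n

lemma TranslationCovariant.deriv {T : L} {φ : FormalDistribution L}
    (h : TranslationCovariant T φ) : TranslationCovariant T φ.deriv := fun n ↦ by
  rw [φ.deriv_apply, φ.deriv.deriv_apply, lie_neg, lie_zsmul, h]

end Covariance

section Operators

attribute [local instance] LieRing.ofAssociativeRing

variable {R V : Type*} [Semiring R] [AddCommGroup V] [Module R V]
  {φ φ₁ φ₂ ψ : FormalDistribution (Module.End R V)} {v : V}

lemma deriv_apply_eq_zero (h : ∀ n ≥ 0, φ n v = 0) : ∀ n ≥ 0, φ.deriv n v = 0 := by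
  intro n hn
  rw [deriv_apply, LinearMap.neg_apply, LinearMap.smul_apply]
  rcases hn.eq_or_lt with rfl | hn
  · rw [zero_smul, neg_zero]
  · rw [h (n - 1) (by lia), smul_zero, neg_zero]

lemma MutuallyLocal.apply_apply_eq_zero (h : MutuallyLocal φ ψ) (hφ : ∀ n, φ n v = 0)
    {m : ℤ} (hψ : ∀ q ≥ m, ψ q v = 0) (n q : ℤ) : φ n (ψ q v) = 0 := by
  obtain ⟨N, h⟩ := h
  have commutator_apply (p q : ℤ) : ⁅φ p, ψ q⁆ v = φ p (ψ q v) := by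
    rw [LieRing.of_associative_ring_bracket, LinearMap.sub_apply, Module.End.mul_apply,
      Module.End.mul_apply, hφ, map_zero, sub_zero]
  have difference_eq_zero : (Δ_[1])^[N] (fun r ↦ φ (n + q - r) (ψ r v)) = 0 := by
    simp only [← commutator_apply]
    refine (fwdDiff_iter_map (AddMonoidHom.mk' (fun f : Module.End R V ↦ f v) fun _ _ ↦ rfl)
      (fun r ↦ ⁅φ (n + q - r), ψ r⁆) N).trans ?_
    rw [h]
    rfl
  have antidiagonal_eq_zero := eq_zero_of_fwdDiff_iter_eq_zero difference_eq_zero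
    fun r hr ↦ by rw [hψ r hr, map_zero]
  simpa using congrFun antidiagonal_eq_zero q

/-- Goddard's uniqueness theorem, without truncation of the fields. -/
lemma MutuallyLocal.apply_apply_congr (h₁ : MutuallyLocal φ₁ ψ) (h₂ : MutuallyLocal φ₂ ψ)
    (hφ : ∀ n, φ₁ n v = φ₂ n v) {m : ℤ} (hψ : ∀ q ≥ m, ψ q v = 0) (n q : ℤ) :
    φ₁ n (ψ q v) = φ₂ n (ψ q v) :=
  sub_eq_zero.mp <| (h₁.sub h₂).apply_apply_eq_zero (fun k ↦ sub_eq_zero.mpr (hφ k)) hψ n q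

namespace TranslationCovariant

variable {T : Module.End R V}

lemma map_apply (hφ : TranslationCovariant T φ) (n : ℤ) (w : V) :
    T (φ n w) = φ.deriv n w + φ n (T w) := by
  rw [← hφ n, LieRing.of_associative_ring_bracket, LinearMap.sub_apply, Module.End.mul_apply,
    Module.End.mul_apply, sub_add_cancel]

lemma map_apply_of_map_eq_zero (hφ : TranslationCovariant T φ) (hv : T v = 0) (n : ℤ) :
    T (φ n v) = -(n • φ (n - 1) v) := by
  rw [hφ.map_apply, hv, map_zero, add_zero, deriv_apply, LinearMap.neg_apply, LinearMap.smul_apply]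

lemma apply_congr [IsAddTorsionFree V] (h₁ : TranslationCovariant T φ₁)
    (h₂ : TranslationCovariant T φ₂) (hv : T v = 0) (h₁v : ∀ n ≥ 0, φ₁ n v = 0)
    (h₂v : ∀ n ≥ 0, φ₂ n v = 0) (h : φ₁ (-1) v = φ₂ (-1) v) (n : ℤ) : φ₁ n v = φ₂ n v := by
  rcases le_or_gt 0 n with hn | hn
  · rw [h₁v n hn, h₂v n hn]
  · induction n, Int.le_sub_one_of_lt hn using Int.leInductionDown with
    | base => exact h
    | pred n hn' ih =>
      have image_eq := congrArg T (ih (by lia))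
      rw [h₁.map_apply_of_map_eq_zero hv, h₂.map_apply_of_map_eq_zero hv, neg_inj] at image_eq
      exact zsmul_right_injective (by lia) image_eq

end TranslationCovariant

end Operators

end FormalDistribution

open FormalDistribution

attribute [local instance] LieRing.ofAssociativeRing

theorem field_translation_eq_deriv {R V : Type*} [Semiring R] [AddCommGroup V] [Module R V]
    [IsAddTorsionFree V] {Y : V → FormalDistribution (Module.End R V)} {T : Module.End R V}
    {vac : V} (locality : ∀ a b, MutuallyLocal (Y a) (Y b))
    (translation : ∀ a, TranslationCovariant T (Y a)) (T_vac : T vac = 0)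
    (creation : ∀ a, ∀ n ≥ 0, Y a n vac = 0) (create_self : ∀ a, Y a (-1) vac = a) (a : V) :
    Y (T a) = (Y a).deriv := by
  have deriv_create_self : (Y a).deriv (-1) vac = T a := by
    rw [← add_zero ((Y a).deriv (-1) vac), ← map_zero (Y a (-1)), ← T_vac,
      ← (translation a).map_apply, create_self]
  have vac_eq := (translation (T a)).apply_congr (translation a).deriv T_vac
    (creation (T a)) (deriv_apply_eq_zero (creation a))
    ((create_self (T a)).trans deriv_create_self.symm)
  ext n b
  simpa only [create_self] using
    (locality (T a) b).apply_apply_congr (locality a b).deriv_left vac_eq (creation b) n (-1)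

theorem T_leibniz_general {R V : Type*} [Semiring R] [AddCommGroup V] [Module R V]
    [IsAddTorsionFree V] (Y : V → FormalDistribution (Module.End R V)) (T : Module.End R V)
    (vac : V) (locality : ∀ a b, MutuallyLocal (Y a) (Y b))
    (translation : ∀ a, TranslationCovariant T (Y a)) (T_vac : T vac = 0)
    (creation : ∀ a, ∀ n ≥ 0, Y a n vac = 0) (create_self : ∀ a, Y a (-1) vac = a)
    (a b : V) (n : ℤ) : T (Y a n b) = Y (T a) n b + Y a n (T b) := by
  rw [field_translation_eq_deriv locality translation T_vac creation create_self,
    (translation a).map_apply]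

namespace UniformVertexAlgebra

variable {V : Type*} [AddCommGroup V] [Module ℂ V] (A : UniformVertexAlgebra V)

/-- The state-field correspondence `a ↦ a(z) = ∑ a(n) z^(-n-1)`. -/
def field (a : V) : FormalDistribution (Module.End ℂ V) := fun n ↦ A.mul n a

lemma mutuallyLocal_field (a b : V) : MutuallyLocal (A.field a) (A.field b) := by
  obtain ⟨N, hN⟩ := A.locality a b
  refine mutuallyLocal_iff_sum.mpr ⟨N, fun p q ↦ LinearMap.ext fun c ↦ ?_⟩
  rw [LinearMap.sum_apply]
  refine (Finset.sum_congr rfl fun r _ ↦ ?_).trans (hN p q c)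
  rw [LinearMap.smul_apply, ← Int.cast_smul_eq_zsmul ℂ]
  push_cast
  rfl

lemma translationCovariant_field (a : V) : TranslationCovariant A.T (A.field a) :=
  fun n ↦ LinearMap.ext (A.translation n a)

end UniformVertexAlgebra

/-- the Leibniz rule `L₋₁(a(n)b) = (L₋₁a)(n)b + a(n)(L₋₁b)`. -/
theorem T_leibniz {V : Type*} [AddCommGroup V] [Module ℂ V]
    (A : UniformVertexAlgebra V) (a b : V) (n : ℤ) :
    A.T (A.mul n a b) = A.mul n (A.T a) b + A.mul n a (A.T b) := by
  have : IsAddTorsionFree V := .of_isTorsionFree ℂ V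
  exact T_leibniz_general A.field A.T A.vac A.mutuallyLocal_field A.translationCovariant_field
    A.T_vac (fun a n ↦ A.creation n a) A.create_self a b n
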